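/- Let R be a commutative Noetherian local ring, M a finitely generated R-module, and p ⊆ q prime ideals of R. Then depth_{R_p}(M_p) ≥ depth_{R_q}(M_q) − dim(R_q / p R_q). -/

import Mathlib

open RingTheory.Sequence IsLocalRing CategoryTheory CategoryTheory.Limits
open scoped TensorProduct

/-- The `I`-depth of the module `M`: the supremum of the lengths of
(weakly) regular sequences on `M` consisting of elements of `I`.
(When `IM ≠ M` this is the common length of maximal `M`-regular sequences in `I`;
when `IM = M`, in particular when `M = 0`, it is `∞`, matching the usual convention.) -/
noncomputable def rdepth {R : Type*} [CommRing R] (I : Ideal R)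
    (M : Type*) [AddCommGroup M] [Module R M] : ℕ∞ :=
  sSup {n : ℕ∞ | ∃ rs : List R, (rs.length : ℕ∞) = n ∧ (∀ r ∈ rs, r ∈ I) ∧
    RingTheory.Sequence.IsWeaklyRegular M rs}

/-!
The core is Ischebeck's theorem: over a Noetherian local ring, if `M` admits a regular sequence of
length `n`, then `Ext^i(N, M) = 0` whenever `dim N + i < n`. A prime filtration reduces this to
`N = S ⧸ p`. For `p` maximal it is Rees' theorem; otherwise some `x` in the maximal ideal is regular
on `N`, and since `dim (N ⧸ x N) = dim N - 1`, descending induction on `i` makes multiplication by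
`x` surjective on the finitely generated module `Ext^i(N, M)`, which then vanishes by Nakayama.
Taking `N = S ⧸ I`, Rees' theorem turns the vanishing into `depth M ≤ depth_I M + dim (S ⧸ I)`.
For `S = R_q` and `I = p R_q`, regular sequences in `I` remain regular after the flat base change
`R_q → R_p`.
-/

universe u v

section Ext

open Abelian

lemma subsingleton_ext_X₂_of_shortExact {C : Type u} [Category.{v} C] [Abelian C] [HasExt C]
    {S : ShortComplex C} (hS : S.ShortExact) (Y : C) {n : ℕ}
    (h₁ : Subsingleton (Ext S.X₁ Y n)) (h₃ : Subsingleton (Ext S.X₃ Y n)) :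
    Subsingleton (Ext S.X₂ Y n) := by
  refine subsingleton_of_forall_eq 0 fun a => ?_
  obtain ⟨b, rfl⟩ := Ext.contravariant_sequence_exact₂ hS Y a (Subsingleton.elim _ _)
  rw [Subsingleton.elim b 0, Ext.comp_zero]

variable {R : Type u} [CommRing R] [Small.{v} R] (N M : ModuleCat.{v} R) {x : R} {i : ℕ}

lemma surjective_smul_ext_of_subsingleton_ext_quotSMulTop_succ (hx : IsSMulRegular N x)
    (h : Subsingleton (Ext (ModuleCat.of R (QuotSMulTop x N)) M (i + 1))) :
    Function.Surjective fun a : Ext N M i => x • a := by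
  intro a
  have : Subsingleton (Ext (N.smulShortComplex x).X₃ M (i + 1)) := h
  obtain ⟨b, hb⟩ := Ext.contravariant_sequence_exact₁ hx.smulShortComplex_shortExact M a
    (add_comm 1 i) (Subsingleton.elim _ _)
  have smul_eq (b : Ext N M i) : x • b = (Ext.mk₀ (x • 𝟙 N)).comp b (zero_add i) := by
    simp [Ext.mk₀_smul]
  exact ⟨b, (smul_eq b).trans hb⟩

lemma subsingleton_ext_of_subsingleton_ext_quotSMulTop_succ [IsNoetherianRing R]
    [Module.Finite R N] [Module.Finite R M] (hx : IsSMulRegular N x)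
    (hxJ : x ∈ Ideal.jacobson (⊥ : Ideal R))
    (h : Subsingleton (Ext (ModuleCat.of R (QuotSMulTop x N)) M (i + 1))) :
    Subsingleton (Ext N M i) := by
  rw [← Submodule.subsingleton_iff R, ← subsingleton_iff_bot_eq_top, eq_comm]
  refine Submodule.eq_bot_of_le_smul_of_le_jacobson_bot (Ideal.jacobson ⊥) ⊤
    Module.Finite.fg_top (fun a _ => ?_) le_rfl
  obtain ⟨b, rfl⟩ := surjective_smul_ext_of_subsingleton_ext_quotSMulTop_succ N M hx h a
  exact Submodule.smul_mem_smul hxJ trivial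

end Ext

lemma support_eq_zeroLocus_of_equiv_quotient {R N : Type*} [CommRing R] [AddCommGroup N]
    [Module R N] {I : Ideal R} (e : N ≃ₗ[R] R ⧸ I) :
    Module.support R N = PrimeSpectrum.zeroLocus I := by
  rw [e.support_eq, Module.support_eq_zeroLocus, Ideal.annihilator_quotient]

section Ischebeck

open Abelian

variable {S : Type u} [CommRing S] [IsLocalRing S]

lemma exists_mem_maximalIdeal_isSMulRegular_quotient {p : Ideal S} [p.IsPrime]
    (hp : p ≠ maximalIdeal S) : ∃ x ∈ maximalIdeal S, IsSMulRegular (S ⧸ p) x := by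
  obtain ⟨x, hxm, hxp⟩ : ∃ x ∈ maximalIdeal S, x ∉ p :=
    SetLike.exists_of_lt ((le_maximalIdeal Ideal.IsPrime.ne_top').lt_of_ne hp)
  refine ⟨x, hxm, (isSMulRegular_quotient_iff_mem_of_smul_mem _ _).mpr fun y hy => ?_⟩
  exact (Ideal.IsPrime.mem_or_mem ‹_› hy).resolve_left hxp

lemma ideal_smul_top_lt_top {M : Type*} [AddCommGroup M] [Module S M] [Module.Finite S M]
    [Nontrivial M] {I : Ideal S} (hI : I ≠ ⊤) : I • (⊤ : Submodule S M) < ⊤ :=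
  (Submodule.top_ne_ideal_smul_of_le_jacobson_annihilator
    ((le_maximalIdeal hI).trans (maximalIdeal_le_jacobson _))).symm.lt_top

variable [IsNoetherianRing S] [Small.{v} S]

theorem subsingleton_ext_of_supportDim_add_lt (M : ModuleCat.{v} S) [Module.Finite S M]
    {rs : List S} (mem : ∀ r ∈ rs, r ∈ maximalIdeal S) (reg : IsRegular M rs)
    (N : Type v) [AddCommGroup N] [Module S N] [hN : Module.Finite S N] (i : ℕ)
    (h : Module.supportDim S N + i < rs.length) :
    Subsingleton (Ext (ModuleCat.of S N) M i) := by
  have := reg.nontrivial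
  induction hN using IsNoetherianRing.induction_on_isQuotientEquivQuotientPrime S with
  | subsingleton N =>
    have := (ModuleCat.isZero_of_subsingleton (ModuleCat.of S N)).hasProjectiveDimensionLT_zero
    exact HasProjectiveDimensionLT.subsingleton _ 0 i i.zero_le M
  | quotient N p e =>
    have : Nontrivial N := e.toEquiv.nontrivial
    have hi : i < rs.length := by
      have h_nonneg : 0 ≤ Module.supportDim S N :=
        Order.krullDim_nonneg_iff.mpr (Module.nonempty_support_of_nontrivial.to_subtype)
      exact_mod_cast (le_add_of_nonneg_left h_nonneg).trans_lt h
    by_cases hp : p.asIdeal = maximalIdeal S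
    · refine ModuleCat.subsingleton_ext_of_exists_isRegular (maximalIdeal S) (ModuleCat.of S N)
        ?_ M (ideal_smul_top_lt_top Ideal.IsPrime.ne_top') rs mem reg i hi
      exact hp ▸ (support_eq_zeroLocus_of_equiv_quotient e).subset
    · obtain ⟨x, hxm, hx⟩ := exists_mem_maximalIdeal_isSMulRegular_quotient hp
      have hxN : IsSMulRegular N x := (e.isSMulRegular_congr x).mpr hx
      have hdim : Module.supportDim S (QuotSMulTop x N) + ↑(i + 1) < rs.length := by
        rwa [← Module.supportDim_quotSMulTop_succ_eq_supportDim hxN hxm, add_assoc,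
          add_comm 1, ← Nat.cast_succ] at h
      exact subsingleton_ext_of_subsingleton_ext_quotSMulTop_succ (ModuleCat.of S N) M hxN
        (maximalIdeal_le_jacobson _ hxm)
        (subsingleton_ext_of_supportDim_add_lt M mem reg (QuotSMulTop x N) (i + 1) hdim)
  | exact N₁ N₂ N₃ f g hf hg hfg h₁ h₃ =>
    have hT : (ModuleCat.shortComplexOfCompEqZero f g hfg.linearMap_comp_eq_zero).ShortExact :=
      { exact := ModuleCat.shortComplex_exact _ hfg
        mono_f := (ModuleCat.mono_iff_injective _).mpr hf
        epi_g := (ModuleCat.epi_iff_surjective _).mpr hg }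
    refine subsingleton_ext_X₂_of_shortExact hT M (h₁ ?_) (h₃ ?_)
    · exact (add_le_add_left (Module.supportDim_le_of_injective f hf) _).trans_lt h
    · exact (add_le_add_left (Module.supportDim_le_of_surjective g hg) _).trans_lt h
termination_by rs.length - i

end Ischebeck

section Depth

variable {R M : Type*} [CommRing R] [AddCommGroup M] [Module R M]

lemma length_le_rdepth {I : Ideal R} {rs : List R} (mem : ∀ r ∈ rs, r ∈ I)
    (reg : IsWeaklyRegular M rs) : (rs.length : ℕ∞) ≤ rdepth I M :=
  le_sSup ⟨rs, rfl, mem, reg⟩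

lemma rdepth_congr {N : Type*} [AddCommGroup N] [Module R N] (I : Ideal R) (e : M ≃ₗ[R] N) :
    rdepth I M = rdepth I N := by
  simp only [rdepth, e.isWeaklyRegular_congr]

lemma rdepth_eq_top_of_subsingleton [Subsingleton M] (I : Ideal R) : rdepth I M = ⊤ := by
  refine ENat.eq_top_iff_forall_ge.mpr fun n => ?_
  have reg : IsWeaklyRegular M (List.replicate n (0 : R)) :=
    ⟨fun _ _ => Function.injective_of_subsingleton _⟩
  simpa using length_le_rdepth (I := I) (by simp +contextual [List.mem_replicate]) reg

lemma rdepth_le_rdepth_of_isBaseChange {A N : Type*} [CommRing A] [Algebra R A] [Module.Flat R A]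
    [AddCommGroup N] [Module R N] [Module A N] [IsScalarTower R A N] {f : M →ₗ[R] N}
    (hf : IsBaseChange A f) (I : Ideal R) :
    rdepth I M ≤ rdepth (I.map (algebraMap R A)) N := by
  refine sSup_le ?_
  rintro _ ⟨rs, rfl, mem, reg⟩
  rw [← List.length_map (algebraMap R A)]
  refine length_le_rdepth (fun r hr => ?_) (reg.of_flat_of_isBaseChange hf)
  obtain ⟨s, hs, rfl⟩ := List.mem_map.mp hr
  exact Ideal.mem_map_of_mem _ (mem s hs)

end Depth

section LocalDepth

variable {S : Type u} [CommRing S] [IsLocalRing S] [IsNoetherianRing S]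

lemma length_le_rdepth_add_of_ringKrullDim_eq [Small.{v} S] {M : Type v} [AddCommGroup M]
    [Module S M] [Module.Finite S M] {I : Ideal S} (hI : I ≠ ⊤) {d : ℕ}
    (hd : ringKrullDim (S ⧸ I) = d)
    {rs : List S} (mem : ∀ r ∈ rs, r ∈ maximalIdeal S) (reg : IsWeaklyRegular M rs) :
    (rs.length : ℕ∞) ≤ rdepth I M + d := by
  rcases subsingleton_or_nontrivial M with hM | hM
  · simp [rdepth_eq_top_of_subsingleton]
  let Q := Shrink.{v} (S ⧸ I)
  let e : Q ≃ₗ[S] S ⧸ I := Shrink.linearEquiv S (S ⧸ I)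
  have : Module.Finite S Q := Module.Finite.equiv e.symm
  have hQdim : Module.supportDim S Q = d := by
    rw [Module.supportDim_eq_of_equiv e, Module.supportDim_quotient_eq_ringKrullDim, hd]
  have h_ext : ∀ i < rs.length - d,
      Subsingleton (Abelian.Ext (ModuleCat.of S Q) (ModuleCat.of S M) i) := fun i hi => by
    refine subsingleton_ext_of_supportDim_add_lt (ModuleCat.of S M) mem
      (.of_isWeaklyRegular_of_mem_maximalIdeal M mem reg) Q i ?_
    rw [hQdim]
    exact_mod_cast Nat.add_lt_of_lt_sub' hi
  obtain ⟨rs', hlen, mem', reg'⟩ := ModuleCat.exists_isRegular_of_exists_subsingleton_ext I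
    (rs.length - d) (ModuleCat.of S M) (ideal_smul_top_lt_top hI) (ModuleCat.of S Q)
    (support_eq_zeroLocus_of_equiv_quotient e) h_ext
  calc (rs.length : ℕ∞) ≤ rs'.length + d := by rw [hlen]; exact_mod_cast le_tsub_add
    _ ≤ rdepth I M + d := add_le_add_left (length_le_rdepth mem' reg'.toIsWeaklyRegular) _

theorem rdepth_maximalIdeal_le_rdepth_add_ringKrullDim (M : Type v) [AddCommGroup M] [Module S M]
    [Module.Finite S M] {I : Ideal S} (hI : I ≠ ⊤) :
    (rdepth (maximalIdeal S) M : WithBot ℕ∞) ≤ rdepth I M + ringKrullDim (S ⧸ I) := by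
  have : Nontrivial (S ⧸ I) := Ideal.Quotient.nontrivial_iff.mpr hI
  have : IsLocalRing (S ⧸ I) := .of_surjective' _ Ideal.Quotient.mk_surjective
  obtain ⟨d, hd⟩ : ∃ d : ℕ, ringKrullDim (S ⧸ I) = d :=
    ⟨_, Order.krullDim_eq_length_of_finiteDimensionalOrder⟩
  have : Small.{max v u} S := small_max.{v, u} S
  let e : ULift.{u} M ≃ₗ[S] M := ULift.moduleEquiv
  have : Module.Finite S (ULift.{u} M) := Module.Finite.equiv e.symm
  suffices h : rdepth (maximalIdeal S) (ULift.{u} M) ≤ rdepth I (ULift.{u} M) + d by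
    rw [rdepth_congr _ e, rdepth_congr _ e] at h
    rw [hd]
    exact_mod_cast h
  refine sSup_le ?_
  rintro _ ⟨rs, rfl, mem, reg⟩
  exact length_le_rdepth_add_of_ringKrullDim_eq hI hd mem reg

end LocalDepth

section Localization

variable {R : Type*} [CommRing R] {M : Type*} [AddCommGroup M] [Module R M]

lemma exists_isBaseChange_of_isBaseChange {A B N P : Type*} [CommRing A] [Algebra R A]
    [CommRing B] [Algebra R B] [Algebra A B] [IsScalarTower R A B]
    [AddCommGroup N] [Module R N] [Module A N] [IsScalarTower R A N]
    [AddCommGroup P] [Module R P] [Module A P] [Module B P] [IsScalarTower R A P]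
    [IsScalarTower R B P] [IsScalarTower A B P] {f : M →ₗ[R] N} {g : M →ₗ[R] P}
    (hf : IsBaseChange A f) (hg : IsBaseChange B g) :
    ∃ h : N →ₗ[A] P, IsBaseChange B h := by
  have hfg : (hf.lift g).restrictScalars R ∘ₗ f = g := LinearMap.ext (hf.lift_eq g)
  exact ⟨hf.lift g, hf.of_comp (hfg.symm ▸ hg)⟩

lemma rdepth_localizedModule_le_of_le {S T : Submonoid R} (hST : S ≤ T) (I : Ideal R) :
    rdepth (I.map (algebraMap R (Localization S))) (LocalizedModule S M) ≤
      rdepth (I.map (algebraMap R (Localization T))) (LocalizedModule T M) := by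
  let A := Localization S
  let B := Localization T
  let P := LocalizedModule T M
  let : Algebra A B := IsLocalization.localizationAlgebraOfSubmonoidLe A B S T hST
  have : IsScalarTower R A B :=
    IsLocalization.localization_isScalarTower_of_submonoid_le A B S T hST
  have : IsLocalization (T.map (algebraMap R A)) B :=
    IsLocalization.isLocalization_of_submonoid_le A B S T hST
  have : Module.Flat A B := IsLocalization.flat B (T.map (algebraMap R A))
  let : Module A P := .restrictScalars A B P
  have : IsScalarTower A B P := .restrictScalars A B P
  have : IsScalarTower R A P := .of_algebraMap_smul fun r m => by
    rw [← algebraMap_smul B (algebraMap R A r) m, ← IsScalarTower.algebraMap_apply,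
      algebraMap_smul]
  obtain ⟨h, hh⟩ := exists_isBaseChange_of_isBaseChange (B := B)
    (LocalizedModule.isBaseChange S M) (LocalizedModule.isBaseChange T M)
  have hle := rdepth_le_rdepth_of_isBaseChange hh (I.map (algebraMap R A))
  rwa [Ideal.map_map, ← IsScalarTower.algebraMap_eq] at hle

end Localization

theorem stmt16_general {R : Type*} [CommRing R] [IsNoetherianRing R]
    (M : Type*) [AddCommGroup M] [Module R M] [Module.Finite R M]
    (p q : Ideal R) [p.IsPrime] [q.IsPrime] (hpq : p ≤ q) :
    (rdepth (maximalIdeal (Localization.AtPrime q))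
        (LocalizedModule q.primeCompl M) : WithBot ℕ∞) ≤
      (rdepth (maximalIdeal (Localization.AtPrime p))
        (LocalizedModule p.primeCompl M) : WithBot ℕ∞) +
      Order.krullDim
        (PrimeSpectrum
          (Localization.AtPrime q ⧸ p.map (algebraMap R (Localization.AtPrime q)))) := by
  have hI : p.map (algebraMap R (Localization.AtPrime q)) ≠ ⊤ := by
    refine ne_top_of_le_ne_top (maximalIdeal.isMaximal (Localization.AtPrime q)).ne_top ?_
    rw [← Localization.AtPrime.map_eq_maximalIdeal]
    exact Ideal.map_mono hpq
  have hcompl : q.primeCompl ≤ p.primeCompl := fun _ hx hxp => hx (hpq hxp)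
  have hle : rdepth (p.map (algebraMap R (Localization.AtPrime q)))
        (LocalizedModule q.primeCompl M) ≤
      rdepth (maximalIdeal (Localization.AtPrime p)) (LocalizedModule p.primeCompl M) := by
    rw [← Localization.AtPrime.map_eq_maximalIdeal]
    exact rdepth_localizedModule_le_of_le hcompl p
  have : Module.Finite (Localization.AtPrime q) (LocalizedModule q.primeCompl M) :=
    .of_isLocalizedModule q.primeCompl (LocalizedModule.mkLinearMap q.primeCompl M)
  exact (rdepth_maximalIdeal_le_rdepth_add_ringKrullDim _ hI).trans
    (add_le_add_left (WithBot.coe_le_coe.mpr hle) _)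

/-- `depth_{R_p}(M_p) ≥ depth_{R_q}(M_q) − dim(R_q / p R_q)` for primes `p ⊆ q`. -/
theorem stmt16 {R : Type*} [CommRing R] [IsNoetherianRing R] [IsLocalRing R]
    (M : Type*) [AddCommGroup M] [Module R M] [Module.Finite R M]
    (p q : Ideal R) [p.IsPrime] [q.IsPrime] (hpq : p ≤ q) :
    (rdepth (maximalIdeal (Localization.AtPrime q))
        (LocalizedModule q.primeCompl M) : WithBot ℕ∞) ≤
      (rdepth (maximalIdeal (Localization.AtPrime p))
        (LocalizedModule p.primeCompl M) : WithBot ℕ∞) +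
      Order.krullDim
        (PrimeSpectrum
          (Localization.AtPrime q ⧸ p.map (algebraMap R (Localization.AtPrime q)))) :=
  stmt16_general M p q hpq
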